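/- Define e_0, e_1, …, e_n ∈ R by det(1 + tA) = ∑_{m=0}^{n} e_m·t^m, the determinant being the column-determinant computed in the polynomial ring R[t] (t a central indeterminate). Then for 1 ≤ m ≤ n: e_m = ∑_{s=1}^{m} (−1)^{m−s} ∑ a_{i_1 j_1}·a_{i_2 j_2}⋯a_{i_s j_s}, where the inner sum is over all sequences of indices i_1,…,i_s and j_1,…,j_s in {1,…,n} such that i_k ≥ j_k for k = 1,…,s, i_k < j_{k+1} for k = 1,…,s−1, and ∑_{k=1}^{s} (i_k − j_k) = m − s. -/

import Mathlib

/-!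
Expanding a column-determinant along its first column is legitimate over any ring, since the
entry of that column is the leftmost factor (`colDet_succ`). For a Hessenberg matrix with
constant superdiagonal `t`, deleting row `i` and the first column leaves `i` rows that are lower
triangular with `t` on the diagonal (`colDet_minor`); hence the trailing principal minors `D k`
satisfy `D k = ∑_{i ≥ k} (-t)^(i-k) M i k D (i+1)` for central `t` (`colDet_hess`).

For `M = 1 + tA` put `w i j = (-1)^(i-j) t^(i-j+1) a_{ij}`; the recurrence becomes
`D k = D (k+1) + ∑_{i ≥ k} w i k D (i+1)`. The sums of products of weights `w` over chains of `s`
disjoint increasing intervals `[j, i]` satisfy the matching recurrence (`chainSum_succ`), so `D 0`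
is the sum of these over all `s` (`colDet_eq_sum_chainSum`). A chain has total weight
`(-1)^(∑(i-j)) t^(s + ∑(i-j)) ∏ a_{ij}`, and the coefficient of `t^m` is read off
(`coeff_chainSum`).
-/

open scoped Classical

/-- The (column-)determinant of the `n × n` matrix with entries `a i j` (`1`-based indices),
over any (possibly noncommutative) ring. -/
noncomputable def cdet {R : Type*} [Ring R] (n : ℕ) (a : ℕ → ℕ → R) : R :=
  ∑ σ : Equiv.Perm (Fin n),
    (Equiv.Perm.sign σ : ℤ) • ((List.finRange n).map (fun t => a ((σ t : ℕ) + 1) ((t : ℕ) + 1))).prod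

/-- The coefficients `e_m ∈ R` defined by `det(1 + tA) = ∑_m e_m t^m`, the determinant being
the column-determinant computed in the polynomial ring `R[t]`. -/
noncomputable def eCoeff {R : Type*} [Ring R] (n : ℕ) (a : ℕ → ℕ → R) (m : ℕ) : R :=
  Polynomial.coeff
    (cdet n (fun i j => (if i = j then 1 else 0) + Polynomial.X * Polynomial.C (a i j))) m


/-! ### Column-determinants of Hessenberg matrices -/

/-- The column-determinant of the `n × n` matrix `M`, with `0`-based indices. -/
noncomputable def colDet {S : Type*} [Ring S] (n : ℕ) (M : ℕ → ℕ → S) : S :=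
  ∑ σ : Equiv.Perm (Fin n),
    (Equiv.Perm.sign σ : ℤ) • ((List.finRange n).map (fun t => M (σ t) t)).prod

/-- The order embedding `ℕ → ℕ` whose range misses exactly `i` (the `ℕ` version of
`Fin.succAbove`). -/
def skip (i r : ℕ) : ℕ := if r < i then r else r + 1

lemma prod_finRange_succ {S : Type*} [Monoid S] (n : ℕ) (f : Fin (n + 1) → S) :
    ((List.finRange (n + 1)).map f).prod
      = f 0 * ((List.finRange n).map (fun t => f t.succ)).prod := by
  rw [List.finRange_succ, List.map_cons, List.prod_cons, List.map_map]
  rfl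

lemma colDet_zero {S : Type*} [Ring S] (M : ℕ → ℕ → S) : colDet 0 M = 1 := by
  simp [colDet]

/-- Laplace expansion along the first column. It holds over a noncommutative ring because the
entry from the first column is the leftmost factor. -/
lemma colDet_succ {S : Type*} [Ring S] (n : ℕ) (M : ℕ → ℕ → S) :
    colDet (n + 1) M = ∑ i ∈ Finset.range (n + 1),
      (-1) ^ i * M i 0 * colDet n (fun r c => M (skip i r) (c + 1)) := by
  -- `(i, τ)` corresponds to the permutation `0 ↦ i`, `t + 1 ↦ i.succAbove (τ t)`.
  let e : Fin (n + 1) × Equiv.Perm (Fin n) → Equiv.Perm (Fin (n + 1)) :=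
    fun x => x.1.cycleRange.symm * Equiv.Perm.decomposeFin.symm (0, x.2)
  have e0 : ∀ x, e x 0 = x.1 := fun x => by simp [e]
  have es : ∀ x t, e x (Fin.succ t) = x.1.succAbove (x.2 t) := fun x t => by simp [e]
  have hinj : Function.Injective e := by
    rintro ⟨i, τ⟩ ⟨j, ρ⟩ h
    have hij : i = j := by
      have := congrArg (fun f : Equiv.Perm (Fin (n + 1)) => f 0) h
      simpa only [e0] using this
    subst hij
    simp only [Prod.mk.injEq, true_and]
    ext1 t
    have := congrArg (fun f : Equiv.Perm (Fin (n + 1)) => f t.succ) h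
    simp only [es] at this
    exact Fin.succAbove_right_injective this
  have hbij : Function.Bijective e := by
    rw [Fintype.bijective_iff_injective_and_card]
    refine ⟨hinj, ?_⟩
    simp [Fintype.card_perm, Nat.factorial_succ]
  have hsign : ∀ x, (Equiv.Perm.sign (e x) : ℤ) = (-1) ^ (x.1 : ℕ) * Equiv.Perm.sign x.2 := by
    intro x
    simp [e, Fin.sign_cycleRange, Equiv.Perm.decomposeFin.symm_sign]
  rw [colDet, ← hbij.sum_comp, Fintype.sum_prod_type, Finset.sum_range]
  refine Finset.sum_congr rfl fun i _ => ?_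
  rw [colDet, Finset.mul_sum]
  refine Finset.sum_congr rfl fun τ _ => ?_
  rw [prod_finRange_succ, hsign, e0]
  have hs : ∀ t : Fin n, ((e (i, τ) t.succ : Fin (n + 1)) : ℕ) = skip i (τ t) := by
    intro t
    rw [es, skip]
    simp only [Fin.succAbove, Fin.lt_def, Fin.val_castSucc]
    split_ifs <;> simp
  simp only [hs, Fin.val_succ, Fin.val_zero]
  rw [mul_smul, mul_smul_comm, mul_assoc, smul_comm]
  congr 1
  rcases Nat.even_or_odd (i : ℕ) with h | h <;> simp [h.neg_one_pow]

lemma colDet_congr {S : Type*} [Ring S] {n : ℕ} {M N : ℕ → ℕ → S}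
    (h : ∀ r c, r < n → c < n → M r c = N r c) : colDet n M = colDet n N := by
  unfold colDet
  simp only [fun (σ : Equiv.Perm (Fin n)) (t : Fin n) => h (σ t) t (σ t).2 t.2]

lemma colDet_eq_zero {S : Type*} [Ring S] {n : ℕ} {M : ℕ → ℕ → S} (hn : 0 < n)
    (h : ∀ c, c < n → M 0 c = 0) : colDet n M = 0 := by
  refine Finset.sum_eq_zero fun σ _ => ?_
  rw [List.prod_eq_zero, smul_zero]
  rw [List.mem_map]
  refine ⟨σ.symm ⟨0, hn⟩, List.mem_finRange _, ?_⟩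
  simpa using h _ (σ.symm ⟨0, hn⟩).2

lemma colDet_of_row {S : Type*} [Ring S] {n : ℕ} {M : ℕ → ℕ → S}
    (h : ∀ c, c < n → M 0 (c + 1) = 0) :
    colDet (n + 1) M = M 0 0 * colDet n (fun r c => M (r + 1) (c + 1)) := by
  rw [colDet_succ, Finset.sum_eq_single 0]
  · simp [skip]
  · intro i hi hi0
    rw [Finset.mem_range] at hi
    rw [colDet_eq_zero (by omega), mul_zero]
    intro c hc
    simp [skip, Nat.pos_of_ne_zero hi0, h c hc]
  · simp

/-- In the minor of a Hessenberg matrix with row `i` and column `0` deleted, the first `i` rows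
are lower triangular with `t` on the diagonal, so they can be peeled off one after another. -/
lemma colDet_minor {S : Type*} [Ring S] (t : S) (i : ℕ) : ∀ (n : ℕ) (M : ℕ → ℕ → S),
    i ≤ n → (∀ r c, r + 1 < c → c ≤ n → M r c = 0) → (∀ r, r + 1 ≤ n → M r (r + 1) = t) →
    colDet n (fun r c => M (skip i r) (c + 1))
      = t ^ i * colDet (n - i) (fun r c => M (r + (i + 1)) (c + (i + 1))) := by
  induction i with
  | zero => intro n M _ _ _; simp [skip]
  | succ i ih =>
    intro n M hi h0 h1
    obtain ⟨n, rfl⟩ : ∃ k, n = k + 1 := ⟨n - 1, by omega⟩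
    rw [colDet_of_row (fun c hc => by
      simpa [skip] using h0 0 (c + 1 + 1) (by omega) (by omega))]
    have hsk : ∀ r, skip (i + 1) (r + 1) = skip i r + 1 := by
      intro r; unfold skip; split_ifs <;> omega
    have := ih n (fun r c => M (r + 1) (c + 1)) (by omega)
      (fun r c hr hc => h0 _ _ (by omega) (by omega)) (fun r hr => h1 _ (by omega))
    simp only [hsk]
    rw [this, pow_succ', mul_assoc]
    simp only [Nat.add_sub_add_right]
    congr 1
    simpa [skip] using h1 0 (by omega)

/-- The recurrence for the trailing principal minors of a Hessenberg matrix. -/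
lemma colDet_hess {S : Type*} [Ring S] (t : S) (n : ℕ) (M : ℕ → ℕ → S)
    (h0 : ∀ r c, r + 1 < c → c < n → M r c = 0) (h1 : ∀ r, r + 1 < n → M r (r + 1) = t)
    (k : ℕ) (hk : k < n) :
    colDet (n - k) (fun r c => M (r + k) (c + k)) = ∑ i ∈ Finset.Ico k n,
      (-1) ^ (i - k) * M i k * t ^ (i - k)
        * colDet (n - (i + 1)) (fun r c => M (r + (i + 1)) (c + (i + 1))) := by
  obtain ⟨d, rfl⟩ : ∃ d, n = d + 1 + k := ⟨n - k - 1, by omega⟩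
  rw [Finset.sum_Ico_eq_sum_range]
  simp only [Nat.add_sub_cancel, Nat.add_sub_cancel_left]
  rw [colDet_succ]
  refine Finset.sum_congr rfl fun i hi => ?_
  rw [Finset.mem_range] at hi
  rw [colDet_minor t i d (fun r c => M (r + k) (c + k)) (by omega)
    (fun r c hr hc => h0 _ _ (by omega) (by omega))
    (fun r hr => by rw [← h1 (r + k) (by omega)]; congr 1; omega)]
  rw [show d + 1 + k - (k + i + 1) = d - i by omega, mul_assoc (_ * _) (t ^ i)]
  simp only [Nat.zero_add, Nat.add_comm k i, Nat.add_right_comm i k 1, Nat.add_assoc]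

/-! ### Sums over chains of intervals -/

/-- The intervals `[J t, I t]` are nonempty, successive ones are disjoint and increasing, and the
first of them (if any) starts at `k` or later. -/
def Chain (n s k : ℕ) (I J : Fin s → Fin n) : Prop :=
  (∀ h : 0 < s, k ≤ (J ⟨0, h⟩ : ℕ)) ∧ (∀ t, (J t : ℕ) ≤ (I t : ℕ)) ∧
    (∀ t : Fin s, ∀ h : (t : ℕ) + 1 < s, (I t : ℕ) < (J ⟨(t : ℕ) + 1, h⟩ : ℕ))

lemma chain_cons {n s k : ℕ} (i j : Fin n) (I J : Fin s → Fin n) :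
    Chain n (s + 1) k (Fin.cons i I) (Fin.cons j J) ↔
      (k ≤ (j : ℕ) ∧ (j : ℕ) ≤ (i : ℕ)) ∧ Chain n s (i + 1) I J := by
  unfold Chain
  constructor
  · rintro ⟨h1, h2, h3⟩
    refine ⟨⟨h1 (Nat.succ_pos s), h2 0⟩, fun h => h3 0 (by simpa using h), fun t => h2 t.succ,
      fun t h => h3 t.succ (by simpa using h)⟩
  · rintro ⟨⟨h1, h2⟩, h3, h4, h5⟩
    refine ⟨fun _ => h1, fun t => ?_, fun t => ?_⟩
    · induction t using Fin.cases with
      | zero => exact h2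
      | succ t => exact h4 t
    · induction t using Fin.cases with
      | zero => exact fun h => h3 (by simpa using h)
      | succ t => exact fun h => h5 t (by simpa using h)

/-- The sum of `∏ t, w (I t) (J t)` over all chains of `s` intervals starting at `k` or later. -/
noncomputable def chainSum {S : Type*} [Ring S] (n : ℕ) (w : ℕ → ℕ → S) (s k : ℕ) : S :=
  ∑ I : Fin s → Fin n, ∑ J : Fin s → Fin n,
    if Chain n s k I J then ((List.finRange s).map (fun t => w (I t) (J t))).prod else 0

lemma chainSum_zero {S : Type*} [Ring S] (n : ℕ) (w : ℕ → ℕ → S) (k : ℕ) :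
    chainSum n w 0 k = 1 := by
  simp [chainSum, Chain]

lemma sum_fin_cons {S α : Type*} [AddCommMonoid S] [Fintype α] (s : ℕ) (f : (Fin (s + 1) → α) → S) :
    ∑ I, f I = ∑ i, ∑ I : Fin s → α, f (Fin.cons i I) := by
  rw [← Fintype.sum_prod_type' (f := fun i I => f (Fin.cons i I))]
  exact (Fintype.sum_equiv (Fin.consEquiv (fun _ => α)) _ _ (fun _ => rfl)).symm

lemma chainSum_succ {S : Type*} [Ring S] (n : ℕ) (w : ℕ → ℕ → S) (s k : ℕ) :
    chainSum n w (s + 1) k =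
      ∑ j ∈ Finset.Ico k n, ∑ i ∈ Finset.Ico j n, w i j * chainSum n w s (i + 1) := by
  have hIco : ∀ (l : ℕ) (f : ℕ → S),
      ∑ j ∈ Finset.Ico l n, f j = ∑ j : Fin n, if l ≤ (j : ℕ) then f j else 0 := by
    intro l f
    rw [← Finset.sum_range (fun j => if l ≤ j then f j else 0), ← Finset.sum_filter]
    refine Finset.sum_congr ?_ fun _ _ => rfl
    ext x; simp; omega
  simp only [hIco]
  rw [chainSum, sum_fin_cons]
  rw [Finset.sum_congr rfl fun i _ => Finset.sum_congr rfl fun I _ => sum_fin_cons s _]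
  rw [Finset.sum_congr rfl fun i _ => Finset.sum_comm, Finset.sum_comm]
  refine Finset.sum_congr rfl fun j _ => ?_
  by_cases hkj : k ≤ (j : ℕ)
  · rw [if_pos hkj]
    refine Finset.sum_congr rfl fun i _ => ?_
    by_cases hji : (j : ℕ) ≤ (i : ℕ)
    · rw [if_pos hji, chainSum]
      simp only [Finset.mul_sum]
      refine Finset.sum_congr rfl fun I _ => Finset.sum_congr rfl fun J _ => ?_
      rw [prod_finRange_succ]
      simp [chain_cons, hkj, hji]
    · simp [chain_cons, hji]
  · simp [chain_cons, hkj]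

/-- Unrolling the recurrence for `D` gives a sum over chains: `D (k + 1)` accounts for the chains
with no interval starting at `k`, and `w i k * D (i + 1)` for those starting with `[k, i]`. The
number of intervals is at most `d = n - k`, so any cut-off `N ≥ d` captures every chain. -/
lemma colDet_eq_sum_chainSum {S : Type*} [Ring S] (n : ℕ) (w : ℕ → ℕ → S) (D : ℕ → S)
    (hDn : D n = 1)
    (hD : ∀ k, k < n → D k = D (k + 1) + ∑ i ∈ Finset.Ico k n, w i k * D (i + 1)) :
    ∀ d k N, k + d = n → d ≤ N → D k = ∑ s ∈ Finset.range (N + 1), chainSum n w s k := by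
  intro d
  induction d using Nat.strong_induction_on with
  | _ d ih =>
    intro k N hk hN
    rw [Finset.sum_range_succ', chainSum_zero]
    simp only [chainSum_succ]
    rcases Nat.eq_zero_or_pos d with rfl | hd
    · have : k = n := by omega
      subst this
      simp [hDn]
    · rw [hD k (by omega), ih (d - 1) (by omega) (k + 1) N (by omega) (by omega),
        Finset.sum_range_succ', chainSum_zero]
      simp only [chainSum_succ]
      obtain ⟨N, rfl⟩ : ∃ N', N = N' + 1 := ⟨N - 1, by omega⟩
      have h2 : ∑ i ∈ Finset.Ico k n, w i k * D (i + 1)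
          = ∑ s ∈ Finset.range (N + 1), ∑ i ∈ Finset.Ico k n, w i k * chainSum n w s (i + 1) := by
        rw [Finset.sum_comm]
        refine Finset.sum_congr rfl fun i hi => ?_
        rw [Finset.mem_Ico] at hi
        rw [ih (n - (i + 1)) (by omega) (i + 1) N (by omega) (by omega), Finset.mul_sum]
      rw [h2, add_right_comm, ← Finset.sum_add_distrib]
      congr 1
      refine Finset.sum_congr rfl fun s _ => ?_
      rw [Finset.sum_eq_sum_Ico_succ_bot (show k < n by omega)
        (fun j => ∑ i ∈ Finset.Ico j n, w i j * chainSum n w s (i + 1)), add_comm]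

/-! ### Coefficients -/

lemma prod_weight {R : Type*} [Ring R] (s : ℕ) (d : Fin s → ℕ) (x : Fin s → R) :
    ((List.finRange s).map (fun t =>
      ((-1) ^ d t * Polynomial.C (x t) * Polynomial.X ^ (d t + 1) : Polynomial R))).prod
      = Polynomial.C ((-1) ^ (∑ t, d t) * ((List.finRange s).map x).prod)
          * Polynomial.X ^ (∑ t, d t + s) := by
  induction s with
  | zero => simp
  | succ s ih =>
    rw [prod_finRange_succ, ih, prod_finRange_succ, Fin.sum_univ_succ]
    have h1 : ∀ e : ℕ, ((-1) ^ e : Polynomial R) = Polynomial.C ((-1) ^ e) := by simp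
    rw [h1, ← Polynomial.C_mul, mul_assoc, ← mul_assoc (Polynomial.X ^ _),
      Polynomial.X_pow_mul_C, mul_assoc, ← pow_add, ← mul_assoc, ← Polynomial.C_mul]
    congr 2
    · have h2 : ∀ (e : ℕ) (y : R), y * (-1) ^ e = (-1) ^ e * y :=
        fun e y => ((Commute.neg_one_right y).pow_right e).eq
      rw [pow_add, mul_assoc, ← mul_assoc (x 0), h2]
      simp only [mul_assoc]
    · omega

lemma coeff_chainSum {R : Type*} [Ring R] (n : ℕ) (a : ℕ → ℕ → R) (s m : ℕ) :
    (chainSum n (fun i j => ((-1) ^ (i - j) * Polynomial.C (a i j)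
      * Polynomial.X ^ (i - j + 1) : Polynomial R)) s 0).coeff m =
    ∑ I : Fin s → Fin n, ∑ J : Fin s → Fin n,
      if Chain n s 0 I J ∧ ∑ t, ((I t : ℕ) - (J t : ℕ)) + s = m then
        (-1) ^ (m - s) * ((List.finRange s).map (fun t => a (I t) (J t))).prod else 0 := by
  simp only [chainSum, Polynomial.finsetSum_coeff]
  refine Finset.sum_congr rfl fun I _ => Finset.sum_congr rfl fun J _ => ?_
  rw [prod_weight s (fun t => (I t : ℕ) - (J t : ℕ)) (fun t => a (I t) (J t))]
  by_cases h : Chain n s 0 I J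
  · by_cases h' : ∑ t, ((I t : ℕ) - (J t : ℕ)) + s = m
    · rw [if_pos h, if_pos ⟨h, h'⟩, Polynomial.coeff_C_mul_X_pow, if_pos h'.symm,
        show m - s = ∑ t, ((I t : ℕ) - (J t : ℕ)) by omega]
    · rw [if_pos h, if_neg (fun h2 => h' h2.2), Polynomial.coeff_C_mul_X_pow,
        if_neg (fun h2 => h' h2.symm)]
  · rw [if_neg h, if_neg (fun h2 => h h2.1), Polynomial.coeff_zero]

/-- Lemma 3.3 of Molev–Ragoucy: for a Hessenberg matrix `A` (`a_{ij} = 0` for `j > i+1`) with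
superdiagonal entries equal to `1`, and `1 ≤ m ≤ n`,
`e_m = ∑_{s=1}^{m} (−1)^{m−s} ∑ a_{i₁j₁}·a_{i₂j₂}⋯a_{i_sj_s}`, the inner sum over all sequences
`i₁,…,i_s`, `j₁,…,j_s` in `{1,…,n}` with `i_k ≥ j_k`, `i_k < j_{k+1}`, and
`∑_k (i_k − j_k) = m − s`. -/
theorem eCoeff_formula {R : Type*} [Ring R] (n : ℕ) (hn : 1 ≤ n)
    (a : ℕ → ℕ → R)
    (hHess : ∀ i j, 1 ≤ i → 1 ≤ j → i ≤ n → j ≤ n → i + 1 < j → a i j = 0)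
    (hSuper : ∀ i, 1 ≤ i → i + 1 ≤ n → a i (i + 1) = 1)
    (m : ℕ) (hm1 : 1 ≤ m) (hmn : m ≤ n) :
    eCoeff n a m =
      ∑ s ∈ Finset.Icc 1 m, (-1 : R) ^ (m - s) *
        ∑ p ∈ Finset.univ.filter
            (fun p : (Fin s → Fin n) × (Fin s → Fin n) =>
              (∀ k, (p.2 k : ℕ) ≤ (p.1 k : ℕ)) ∧
              (∀ k : Fin s, ∀ h : (k : ℕ) + 1 < s, (p.1 k : ℕ) < (p.2 ⟨(k : ℕ) + 1, h⟩ : ℕ)) ∧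
              (∑ k, ((p.1 k : ℕ) - (p.2 k : ℕ)) = m - s)),
          ((List.finRange s).map (fun k => a ((p.1 k : ℕ) + 1) ((p.2 k : ℕ) + 1))).prod := by
  let b : ℕ → ℕ → R := fun i j => a (i + 1) (j + 1)
  let w : ℕ → ℕ → Polynomial R := fun i j =>
    (-1) ^ (i - j) * Polynomial.C (b i j) * Polynomial.X ^ (i - j + 1)
  let M : ℕ → ℕ → Polynomial R := fun i j =>
    (if i = j then 1 else 0) + Polynomial.X * Polynomial.C (b i j)
  have h0 : ∀ r c, r + 1 < c → c < n → M r c = 0 := by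
    intro r c hr hc
    have : b r c = 0 := hHess _ _ (by omega) (by omega) (by omega) (by omega) (by omega)
    simp [M, this, show r ≠ c by omega]
  have h1 : ∀ r, r + 1 < n → M r (r + 1) = Polynomial.X := by
    intro r hr
    have : b r (r + 1) = 1 := hSuper _ (by omega) (by omega)
    simp [M, this]
  let D : ℕ → Polynomial R := fun k => colDet (n - k) (fun r c => M (r + k) (c + k))
  have hD : ∀ k, k < n → D k = D (k + 1) + ∑ i ∈ Finset.Ico k n, w i k * D (i + 1) := by
    intro k hk
    have key : ∀ i, (-1) ^ (i - k) * M i k * Polynomial.X ^ (i - k)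
        = (if i = k then 1 else 0) + w i k := by
      intro i
      simp only [M, w, mul_add, add_mul, pow_succ']
      congr 1
      · split_ifs with h <;> simp [h]
      · simp only [Polynomial.X_mul, mul_assoc]
    have hrec := colDet_hess Polynomial.X n M h0 h1 k hk
    simp only [key, add_mul, Finset.sum_add_distrib, ite_mul, one_mul, zero_mul] at hrec
    rw [Finset.sum_ite_eq_of_mem' _ _ _ (by simp [hk])] at hrec
    exact hrec
  have hmain := colDet_eq_sum_chainSum n w D (by simp [D, colDet_zero]) hD n 0 n (by simp) le_rfl
  have hdet : cdet n (fun i j => (if i = j then 1 else 0) + Polynomial.X * Polynomial.C (a i j))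
      = D 0 := by
    simp only [cdet, D, colDet, M, b, add_left_inj, Nat.sub_zero, Nat.add_zero]
  rw [eCoeff, hdet, hmain, Polynomial.finsetSum_coeff]
  -- The terms with `s = 0` or `s > m` do not contribute to the coefficient of `t ^ m`.
  rw [← Finset.sum_subset (s₁ := Finset.Icc 1 m)]
  · refine Finset.sum_congr rfl fun s hs => ?_
    rw [Finset.mem_Icc] at hs
    rw [coeff_chainSum, Finset.mul_sum, Finset.sum_filter, Fintype.sum_prod_type]
    refine Finset.sum_congr rfl fun I _ => Finset.sum_congr rfl fun J _ => ?_
    refine if_congr ?_ rfl rfl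
    simp only [Chain, Nat.zero_le, implies_true, true_and, and_assoc]
    refine and_congr_right fun _ => and_congr_right fun _ => ?_
    omega
  · intro s hs
    simp only [Finset.mem_Icc, Finset.mem_range] at hs ⊢
    omega
  · intro s _ hs
    rw [Finset.mem_Icc] at hs
    rcases Nat.eq_zero_or_pos s with rfl | hs0
    · rw [chainSum_zero, Polynomial.coeff_one, if_neg (by omega)]
    · rw [coeff_chainSum]
      refine Finset.sum_eq_zero fun I _ => Finset.sum_eq_zero fun J _ => if_neg ?_
      rintro ⟨_, h⟩
      omega
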